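/- Let N ≥ 1 and let D be a bounded domain in ℂ^N that is homogeneous, i.e. for all p, q ∈ D there exists a holomorphic bijection of D onto itself, with holomorphic inverse, sending p to q. Let M be a bounded domain in ℂ^N such that for every compact K ⊆ M there is an injective holomorphic map f_K : D → M with K ⊆ f_K(D). Then there exists a holomorphic bijection from D onto M with holomorphic inverse. -/

import Mathlib

open Filter Topology Set

/-!
Homogeneity lets every exhausting map be normalised to send a fixed point `p` of `D` to a fixed
point `q` of `M`. The maps and their inverses are then normal families: by Montel's theorem they
converge locally uniformly, along an ultrafilter of compact sets, to holomorphic maps `F` and `G`,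
and `G' (q) ∘ F' (p) = 1`. By Osgood's theorem the Jacobian determinants of injective holomorphic
maps do not vanish, so by Hurwitz's theorem the ones of `F` and `G`, being nonzero at one point,
vanish nowhere. Hence `F` and `G` are open maps, do not touch the boundaries of `M` and `D`, and
are inverse to each other.
-/

open Metric

section LocallyUniformLimits

variable {E F ι : Type*} [NormedAddCommGroup E] [NormedSpace ℂ E]
  [NormedAddCommGroup F] [NormedSpace ℂ F] {l : Filter ι}

theorem dist_le_of_norm_le_on_ball {f : E → F} {c y : E} {R C : ℝ}
    (hf : DifferentiableOn ℂ f (ball c R)) (hC : ∀ y ∈ ball c R, ‖f y‖ ≤ C)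
    (hy : y ∈ ball c R) : dist (f y) (f c) ≤ 2 * C / R * dist y c := by
  have hR : 0 < R := nonempty_ball.mp ⟨_, hy⟩
  refine Complex.dist_le_div_mul_dist_of_mapsTo_ball hf (fun x hx => ?_) hy
  rw [mem_closedBall, dist_eq_norm]
  linarith [norm_sub_le (f x) (f c), hC x hx, hC c (mem_ball_self hR)]

theorem norm_fderiv_le_of_norm_le_on_ball {f : E → F} {c : E} {R C : ℝ} (hR : 0 < R)
    (hf : DifferentiableOn ℂ f (ball c R)) (hC : ∀ y ∈ ball c R, ‖f y‖ ≤ C) :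
    ‖fderiv ℂ f c‖ ≤ 2 * C / R := by
  refine Complex.norm_fderiv_le_div_of_mapsTo_ball hf (fun x hx => ?_) hR
  rw [mem_closedBall, dist_eq_norm]
  linarith [norm_sub_le (f x) (f c), hC x hx, hC c (mem_ball_self hR)]

theorem eventually_prod_nhds_iff_ball {X : Type*} [PseudoMetricSpace X] {x : X}
    {P : ι × X → Prop} :
    (∀ᶠ p in l ×ˢ 𝓝 x, P p) ↔ ∃ R > 0, ∀ᶠ i in l, ∀ y ∈ ball x R, P (i, y) := by
  rw [Metric.eventually_prod_nhds_iff]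
  constructor
  · rintro ⟨Q, hQ, R, hR, h⟩
    exact ⟨R, hR, hQ.mono fun i hi y hy => h hi hy⟩
  · rintro ⟨R, hR, h⟩
    exact ⟨_, h, R, hR, fun i hi y hy => hi y hy⟩

theorem tendstoLocallyUniformlyOn_iff_tendsto_prod_nhds {X Y : Type*} [TopologicalSpace X]
    [UniformSpace Y] {f : ι → X → Y} {g : X → Y} {U : Set X} (hU : IsOpen U)
    (hg : ContinuousOn g U) :
    TendstoLocallyUniformlyOn f g l U ↔
      ∀ z ∈ U, Tendsto (fun p : ι × X => f p.1 p.2) (l ×ˢ 𝓝 z) (𝓝 (g z)) := by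
  rw [hU.tendstoLocallyUniformlyOn_iff_forall_tendsto]
  refine forall₂_congr fun z hz => ?_
  have hgz : Tendsto (fun p : ι × X => g p.2) (l ×ˢ 𝓝 z) (𝓝 (g z)) :=
    (hg.continuousAt (hU.mem_nhds hz)).tendsto.comp tendsto_snd
  exact ⟨hgz.congr_uniformity, fun h => (hgz.prodMk_nhds h).mono_right (nhds_le_uniformity _)⟩

theorem continuousOn_of_tendsto_prod_nhds [l.NeBot] {X Y : Type*} [TopologicalSpace X]
    [TopologicalSpace Y] [RegularSpace Y] {f : ι → X → Y} {g : X → Y} {U : Set X} (hU : IsOpen U)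
    (h : ∀ z ∈ U, Tendsto (fun p : ι × X => f p.1 p.2) (l ×ˢ 𝓝 z) (𝓝 (g z))) :
    ContinuousOn g U := by
  refine continuousOn_of_forall_continuousAt fun z hz => ?_
  rw [ContinuousAt, (closed_nhds_basis (g z)).tendsto_right_iff]
  rintro V ⟨hV, hVc⟩
  filter_upwards [(eventually_swap_iff.mp ((h z hz).eventually hV)).curry, hU.mem_nhds hz]
    with y hy hyU
  exact hVc.mem_of_tendsto ((h y hyU).comp (tendsto_id.prodMk tendsto_const_nhds)) hy

/-- A family of maps is *eventually holomorphic* on `U` along `l` if near each point of `U` its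
members are holomorphic from some point of `l` on. No single member has to be holomorphic on all
of `U`, so that the inverses of maps onto larger and larger parts of `U` form such a family. -/
def EventuallyHolomorphicOn (f : ι → E → F) (l : Filter ι) (U : Set E) : Prop :=
  ∀ z ∈ U, ∀ᶠ p in l ×ˢ 𝓝 z, DifferentiableAt ℂ (f p.1) p.2

theorem tendsto_prod_nhds_of_isBoundedUnder {f : ι → E → F} {z : E} {w : F}
    (hf : ∀ᶠ p in l ×ˢ 𝓝 z, DifferentiableAt ℂ (f p.1) p.2)
    (hbdd : (l ×ˢ 𝓝 z).IsBoundedUnder (· ≤ ·) fun p => ‖f p.1 p.2‖)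
    (hw : Tendsto (fun i => f i z) l (𝓝 w)) :
    Tendsto (fun p => f p.1 p.2) (l ×ˢ 𝓝 z) (𝓝 w) := by
  obtain ⟨C, hC⟩ := hbdd
  obtain ⟨R, hR, hfR⟩ := eventually_prod_nhds_iff_ball.mp (hf.and (eventually_map.mp hC))
  refine (hw.comp tendsto_fst).congr_dist (squeeze_zero' (.of_forall fun _ => dist_nonneg)
    (g := fun p => 2 * C / R * dist p.2 z) ?_ ?_)
  · filter_upwards [hfR.prod_mk (ball_mem_nhds z hR)] with p hp
    rw [dist_comm]
    exact dist_le_of_norm_le_on_ball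
      (fun y hy => (hp.1 y hy).1.differentiableWithinAt) (fun y hy => (hp.1 y hy).2) hp.2
  · have hdist : Tendsto (fun p : ι × E => dist p.2 z) (l ×ˢ 𝓝 z) (𝓝 0) :=
      (tendsto_iff_dist_tendsto_zero.mp tendsto_id).comp tendsto_snd
    simpa using hdist.const_mul (2 * C / R)

theorem tendstoLocallyUniformlyOn_of_isBoundedUnder [l.NeBot] {f : ι → E → F} {g : E → F}
    {U : Set E} (hU : IsOpen U) (hf : EventuallyHolomorphicOn f l U)
    (hbdd : ∀ z ∈ U, (l ×ˢ 𝓝 z).IsBoundedUnder (· ≤ ·) fun p => ‖f p.1 p.2‖)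
    (hg : ∀ z ∈ U, Tendsto (fun i => f i z) l (𝓝 (g z))) :
    TendstoLocallyUniformlyOn f g l U := by
  have hjoint : ∀ z ∈ U, Tendsto (fun p : ι × E => f p.1 p.2) (l ×ˢ 𝓝 z) (𝓝 (g z)) :=
    fun z hz => tendsto_prod_nhds_of_isBoundedUnder (hf z hz) (hbdd z hz) (hg z hz)
  exact (tendstoLocallyUniformlyOn_iff_tendsto_prod_nhds hU
    (continuousOn_of_tendsto_prod_nhds hU hjoint)).mpr hjoint

theorem exists_tendstoLocallyUniformlyOn_of_ultrafilter [FiniteDimensional ℂ F]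
    {l : Ultrafilter ι} {f : ι → E → F} {U : Set E} (hU : IsOpen U)
    (hf : EventuallyHolomorphicOn f l U)
    (hbdd : ∀ z ∈ U, ((l : Filter ι) ×ˢ 𝓝 z).IsBoundedUnder (· ≤ ·) fun p => ‖f p.1 p.2‖) :
    ∃ g, TendstoLocallyUniformlyOn f g l U := by
  have : ProperSpace F := FiniteDimensional.proper ℂ F
  have hlim : ∀ z ∈ U, ∃ w, Tendsto (fun i => f i z) l (𝓝 w) := by
    intro z hz
    obtain ⟨C, hC⟩ := hbdd z hz
    have hCz : ∀ᶠ i in (l : Filter ι), f i z ∈ closedBall 0 C :=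
      (eventually_map.mp hC).curry.mono fun i hi => by simpa using hi.self_of_nhds
    obtain ⟨w, -, hw⟩ := (isCompact_closedBall (0 : F) C).ultrafilter_le_nhds
      (l.map fun i => f i z) (le_principal_iff.mpr hCz)
    exact ⟨w, hw⟩
  choose! g hg using hlim
  exact ⟨g, tendstoLocallyUniformlyOn_of_isBoundedUnder hU hf hbdd hg⟩

section Weierstrass

variable [FiniteDimensional ℂ E] {f : ι → E → F} {g : E → F} {U : Set E}

theorem uniformCauchySeqOnFilter_fderiv (hU : IsOpen U) (hf : EventuallyHolomorphicOn f l U)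
    (hg : TendstoLocallyUniformlyOn f g l U) {z : E} (hz : z ∈ U) :
    UniformCauchySeqOnFilter (fun i => fderiv ℂ (f i)) l (𝓝 z) := by
  have : ProperSpace E := FiniteDimensional.proper ℂ E
  obtain ⟨R, hR, hfR⟩ := eventually_prod_nhds_iff_ball.mp (hf z hz)
  obtain ⟨ρ, hρ, hρU⟩ := nhds_basis_closedBall.mem_iff.mp (hU.mem_nhds hz)
  have hunif : UniformCauchySeqOn f l (closedBall z ρ) :=
    ((tendstoLocallyUniformlyOn_iff_forall_isCompact hU).mp hg _ hρU
      (isCompact_closedBall z ρ)).uniformCauchySeqOn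
  set r := min R ρ / 2
  have hr : 0 < r := by positivity
  have hrr : r + r = min R ρ := add_halves _
  have hball : ∀ y ∈ ball z r, ball y r ⊆ ball z R ∩ closedBall z ρ := by
    intro y hy
    have hsub : ball y r ⊆ ball z (min R ρ) := ball_subset_ball' (by linarith [mem_ball.mp hy])
    exact subset_inter (hsub.trans (ball_subset_ball (min_le_left _ _)))
      (hsub.trans (ball_subset_closedBall.trans (closedBall_subset_closedBall (min_le_right _ _))))
  intro u hu
  obtain ⟨ε, hε, hεu⟩ := mem_uniformity_dist.mp hu
  have hsmall := hunif _ (dist_mem_uniformity (show 0 < ε / 2 * r / 2 by positivity))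
  filter_upwards [(hsmall.and (hfR.prod_mk hfR)).prod_mk (ball_mem_nhds z hr)]
    with ⟨⟨i, j⟩, y⟩ ⟨⟨hij, hi, hj⟩, hy⟩
  have hyR : y ∈ ball z R := (hball y hy (mem_ball_self hr)).1
  refine hεu ?_
  calc dist (fderiv ℂ (f i) y) (fderiv ℂ (f j) y)
      = ‖fderiv ℂ (f i - f j) y‖ := by rw [dist_eq_norm, fderiv_sub (hi y hyR) (hj y hyR)]
    _ ≤ 2 * (ε / 2 * r / 2) / r := by
      refine norm_fderiv_le_of_norm_le_on_ball hr (fun x hx => ?_) fun x hx => ?_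
      · have hxR := (hball y hy hx).1
        exact ((hi x hxR).sub (hj x hxR)).differentiableWithinAt
      · rw [Pi.sub_apply, ← dist_eq_norm]
        exact (hij x (hball y hy hx).2).le
    _ = ε / 2 := by field_simp
    _ < ε := half_lt_self hε

theorem exists_tendstoLocallyUniformlyOn_fderiv [CompleteSpace F] [l.NeBot]
    (hU : IsOpen U) (hf : EventuallyHolomorphicOn f l U)
    (hg : TendstoLocallyUniformlyOn f g l U) :
    ∃ g' : E → E →L[ℂ] F, TendstoLocallyUniformlyOn (fun i => fderiv ℂ (f i)) g' l U ∧
      ∀ z ∈ U, HasFDerivAt g (g' z) z := by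
  have hcauchy := fun z hz => uniformCauchySeqOnFilter_fderiv hU hf hg (z := z) hz
  have hlim : ∀ z ∈ U, ∃ L, Tendsto (fun i => fderiv ℂ (f i) z) l (𝓝 L) := by
    intro z hz
    have hsingle : UniformCauchySeqOn (fun i => fderiv ℂ (f i)) l {z} := by
      rw [uniformCauchySeqOn_iff_uniformCauchySeqOnFilter, principal_singleton]
      exact (hcauchy z hz).mono_right (pure_le_nhds z)
    exact cauchy_map_iff_exists_tendsto.mp (hsingle.cauchy_map (mem_singleton z))
  choose! g' hg' using hlim
  have hunif : ∀ z ∈ U, TendstoUniformlyOnFilter (fun i => fderiv ℂ (f i)) g' l (𝓝 z) :=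
    fun z hz => (hcauchy z hz).tendstoUniformlyOnFilter_of_tendsto
      ((hU.eventually_mem hz).mono hg')
  refine ⟨g', tendstoLocallyUniformlyOn_iff_filter.mpr
    fun z hz => (hunif z hz).mono_right inf_le_left, fun z hz => ?_⟩
  exact hasFDerivAt_of_tendstoUniformlyOnFilter (hunif z hz)
    ((hf z hz).mono fun p hp => hp.hasFDerivAt)
    ((hU.eventually_mem hz).mono fun y hy => hg.tendsto_at hy)

theorem differentiableOn_of_tendstoLocallyUniformlyOn [CompleteSpace F] [l.NeBot]
    (hU : IsOpen U) (hf : EventuallyHolomorphicOn f l U)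
    (hg : TendstoLocallyUniformlyOn f g l U) : DifferentiableOn ℂ g U := by
  obtain ⟨_, -, hgg'⟩ := exists_tendstoLocallyUniformlyOn_fderiv hU hf hg
  exact fun z hz => (hgg' z hz).differentiableAt.differentiableWithinAt

theorem tendstoLocallyUniformlyOn_fderiv [CompleteSpace F] [l.NeBot]
    (hU : IsOpen U) (hf : EventuallyHolomorphicOn f l U)
    (hg : TendstoLocallyUniformlyOn f g l U) :
    TendstoLocallyUniformlyOn (fun i => fderiv ℂ (f i)) (fderiv ℂ g) l U := by
  obtain ⟨_, hg', hgg'⟩ := exists_tendstoLocallyUniformlyOn_fderiv hU hf hg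
  exact hg'.congr_right fun z hz => (hgg' z hz).fderiv.symm

end Weierstrass

section HolomorphicDerivative

variable {f : E → F} {U : Set E}

theorem isBoundedUnder_norm_difference_quotient (hU : IsOpen U) (hf : DifferentiableOn ℂ f U)
    (v : E) {z : E} (hz : z ∈ U) :
    (𝓝[≠] (0 : ℂ) ×ˢ 𝓝 z).IsBoundedUnder (· ≤ ·)
      fun p => ‖p.1⁻¹ • (f (p.2 + p.1 • v) - f p.2)‖ := by
  have hfz := hf.continuousOn.continuousAt (hU.mem_nhds hz)
  obtain ⟨r, hr, hrf⟩ := Metric.eventually_nhds_iff_ball.mp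
    ((hfz.norm.eventually (gt_mem_nhds (lt_add_one ‖f z‖))).and (hU.eventually_mem hz))
  have hsmall : ∀ᶠ t in 𝓝[≠] (0 : ℂ), t • v ∈ ball (0 : E) (r / 2) :=
    nhdsWithin_le_nhds ((by fun_prop : Continuous fun t : ℂ => t • v).continuousAt.eventually_mem
      (isOpen_ball.mem_nhds (by simpa using hr)))
  refine ⟨2 * (‖f z‖ + 1) / (r / 2) * ‖v‖, eventually_map.mpr ?_⟩
  filter_upwards [(hsmall.and eventually_mem_nhdsWithin).prod_mk
    (ball_mem_nhds z (half_pos hr))] with ⟨t, y⟩ ⟨⟨htv, ht⟩, hy⟩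
  have hsub : ball y (r / 2) ⊆ ball z r :=
    ball_subset_ball' (by linarith [mem_ball.mp hy])
  have hlip := dist_le_of_norm_le_on_ball (hf.mono fun x hx => (hrf x (hsub hx)).2)
    (fun x hx => (hrf x (hsub hx)).1.le) (y := y + t • v) (by simpa using htv)
  rw [dist_eq_norm, dist_self_add_left, norm_smul] at hlip
  rw [norm_smul, norm_inv, inv_mul_le_iff₀ (norm_pos_iff.mpr ht)]
  linarith

theorem differentiableOn_fderiv_apply [FiniteDimensional ℂ E] [CompleteSpace F] (hU : IsOpen U)
    (hf : DifferentiableOn ℂ f U) (v : E) : DifferentiableOn ℂ (fun z => fderiv ℂ f z v) U := by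
  have hd : ∀ z ∈ U, ∀ᶠ y in 𝓝 z, DifferentiableAt ℂ f y := fun z hz =>
    (hU.eventually_mem hz).mono fun y hy => hf.differentiableAt (hU.mem_nhds hy)
  have hhol : EventuallyHolomorphicOn (fun (t : ℂ) y => t⁻¹ • (f (y + t • v) - f y))
      (𝓝[≠] 0) U := by
    intro z hz
    have hshift : Tendsto (fun p : ℂ × E => p.2 + p.1 • v) (𝓝[≠] 0 ×ˢ 𝓝 z) (𝓝 z) := by
      have : Tendsto (fun p : ℂ × E => p.2 + p.1 • v) (𝓝 (0, z)) (𝓝 (z + (0 : ℂ) • v)) :=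
        Continuous.tendsto (by fun_prop) _
      rw [nhds_prod_eq, zero_smul, add_zero] at this
      exact this.mono_left (prod_mono_left _ nhdsWithin_le_nhds)
    filter_upwards [hshift.eventually (hd z hz), tendsto_snd.eventually (hd z hz)] with p hp hp'
    exact ((hp.comp p.2 (differentiableAt_id.add_const _)).sub hp').const_smul _
  refine differentiableOn_of_tendstoLocallyUniformlyOn hU hhol
    (tendstoLocallyUniformlyOn_of_isBoundedUnder hU hhol
      (fun z hz => isBoundedUnder_norm_difference_quotient hU hf v hz) fun z hz => ?_)
  have hline : HasLineDerivAt ℂ f (fderiv ℂ f z v) z v :=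
    (hd z hz).self_of_nhds.hasFDerivAt.hasLineDerivAt v
  exact hline.tendsto_slope_zero

theorem contDiffOn_one_of_differentiableOn [FiniteDimensional ℂ E] [CompleteSpace F]
    (hU : IsOpen U) (hf : DifferentiableOn ℂ f U) : ContDiffOn ℂ 1 f U := by
  rw [← zero_add (1 : WithTop ℕ∞), contDiffOn_succ_iff_fderiv_of_isOpen hU, contDiffOn_clm_apply]
  exact ⟨hf, by simp, fun v =>
    contDiffOn_zero.mpr (differentiableOn_fderiv_apply hU hf v).continuousOn⟩

theorem hasStrictFDerivAt_of_differentiableOn [FiniteDimensional ℂ E] [CompleteSpace F]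
    (hU : IsOpen U) (hf : DifferentiableOn ℂ f U) {z : E} (hz : z ∈ U) :
    HasStrictFDerivAt f (fderiv ℂ f z) z :=
  ((contDiffOn_one_of_differentiableOn hU hf).contDiffAt (hU.mem_nhds hz)).hasStrictFDerivAt
    one_ne_zero

theorem tendsto_fderiv_prod_nhds [FiniteDimensional ℂ E] [CompleteSpace F] [l.NeBot]
    {f : ι → E → F} {g : E → F} (hU : IsOpen U) (hf : EventuallyHolomorphicOn f l U)
    (hg : TendstoLocallyUniformlyOn f g l U) {z : E} (hz : z ∈ U) :
    Tendsto (fun p => fderiv ℂ (f p.1) p.2) (l ×ˢ 𝓝 z) (𝓝 (fderiv ℂ g z)) := by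
  have hgd : DifferentiableOn ℂ g U := differentiableOn_of_tendstoLocallyUniformlyOn hU hf hg
  have hg' : ContinuousOn (fderiv ℂ g) U :=
    (contDiffOn_one_of_differentiableOn hU hgd).continuousOn_fderiv_of_isOpen hU le_rfl
  exact (tendstoLocallyUniformlyOn_iff_tendsto_prod_nhds hU hg').mp
    (tendstoLocallyUniformlyOn_fderiv hU hf hg) z hz

end HolomorphicDerivative

end LocallyUniformLimits

section Hurwitz

theorem exists_eq_zero_of_norm_lt_on_sphere {k : ℂ → ℂ} {z₀ : ℂ} {r m : ℝ} (hr : 0 < r)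
    (hk : DifferentiableOn ℂ k (closedBall z₀ r)) (hm : ∀ t ∈ sphere z₀ r, m ≤ ‖k t‖)
    (h₀ : ‖k z₀‖ < m) : ∃ t ∈ closedBall z₀ r, k t = 0 := by
  -- Otherwise the maximum principle for `1 / k` bounds `‖k z₀‖` below by `m`.
  by_contra! hne
  have hm0 : 0 < m := (norm_nonneg _).trans_lt h₀
  have hd : DiffContOnCl ℂ (fun t => (k t)⁻¹) (ball z₀ r) := by
    refine DifferentiableOn.diffContOnCl ?_
    rw [closure_ball _ hr.ne']
    exact hk.inv hne
  have hmax : ‖(k z₀)⁻¹‖ ≤ m⁻¹ := by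
    refine Complex.norm_le_of_forall_mem_frontier_norm_le isBounded_ball hd (fun t ht => ?_)
      (subset_closure (mem_ball_self hr))
    rw [frontier_ball _ hr.ne'] at ht
    rw [norm_inv]
    exact inv_anti₀ hm0 (hm t ht)
  rw [norm_inv, inv_le_inv₀ (norm_pos_iff.mpr (hne z₀ (mem_closedBall_self hr.le))) hm0] at hmax
  linarith

theorem eventually_exists_eq_zero_of_tendstoLocallyUniformlyOn {ι : Type*} {l : Filter ι}
    [l.NeBot] {f : ι → ℂ → ℂ} {g : ℂ → ℂ} {U V : Set ℂ} (hU : IsOpen U)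
    (hf : EventuallyHolomorphicOn f l U) (hg : TendstoLocallyUniformlyOn f g l U) {z : ℂ}
    (hz : z ∈ U) (hgz : g z = 0) (hne : ∀ᶠ t in 𝓝[≠] z, g t ≠ 0) (hV : V ∈ 𝓝 z) :
    ∀ᶠ i in l, ∃ t ∈ V, f i t = 0 := by
  obtain ⟨R, hR, hfR⟩ := eventually_prod_nhds_iff_ball.mp (hf z hz)
  obtain ⟨r, hr, hrU⟩ := nhds_basis_closedBall.mem_iff.mp (inter_mem (ball_mem_nhds z hR)
    (inter_mem (inter_mem (hU.mem_nhds hz) hV) (eventually_nhdsWithin_iff.mp hne)))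
  have hgd : DifferentiableOn ℂ g U := differentiableOn_of_tendstoLocallyUniformlyOn hU hf hg
  obtain ⟨t₀, ht₀, hmin⟩ := (isCompact_sphere z r).exists_isMinOn (f := fun t => ‖g t‖)
    (NormedSpace.sphere_nonempty.mpr hr.le)
    (hgd.continuousOn.mono fun t ht => (hrU (sphere_subset_closedBall ht)).2.1.1).norm
  have hm : 0 < ‖g t₀‖ := norm_pos_iff.mpr
    ((hrU (sphere_subset_closedBall ht₀)).2.2 (ne_of_mem_sphere ht₀ hr.ne'))
  have hunif : TendstoUniformlyOn f g l (closedBall z r) :=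
    (tendstoLocallyUniformlyOn_iff_forall_isCompact hU).mp hg _ (fun t ht => (hrU ht).2.1.1)
      (isCompact_closedBall z r)
  filter_upwards [hfR, Metric.tendstoUniformlyOn_iff.mp hunif _ (half_pos hm)] with i hi hclose
  have hcentre : ‖f i z‖ < ‖g t₀‖ / 2 := by
    simpa [hgz] using hclose z (mem_closedBall_self hr.le)
  have hsphere : ∀ t ∈ sphere z r, ‖g t₀‖ / 2 ≤ ‖f i t‖ := by
    intro t ht
    have hdist := hclose t (sphere_subset_closedBall ht)
    have hle : ‖g t₀‖ ≤ ‖g t‖ := hmin ht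
    rw [dist_eq_norm] at hdist
    linarith [norm_le_norm_add_norm_sub' (g t) (f i t)]
  obtain ⟨t, ht, hft⟩ := exists_eq_zero_of_norm_lt_on_sphere hr
    (fun t ht => (hi t (hrU ht).1).differentiableWithinAt) hsphere hcentre
  exact ⟨t, (hrU ht).2.1.2, hft⟩

variable {E ι : Type*} [NormedAddCommGroup E] [NormedSpace ℂ E] {l : Filter ι}

theorem eq_zero_of_eventually_lineMap_eq_zero {h : E → ℂ} {c b : E} {r : ℝ}
    (hh : DifferentiableOn ℂ h (ball c r)) (hb : b ∈ ball c r)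
    (h0 : ∀ᶠ t in 𝓝 (0 : ℂ), h (AffineMap.lineMap c b t) = 0) : h b = 0 := by
  set S : Set ℂ := AffineMap.lineMap c b ⁻¹' ball c r
  have hline : Differentiable ℂ (AffineMap.lineMap c b : ℂ → E) :=
    fun t => AffineMap.hasDerivAt_lineMap.differentiableAt
  have hSconv : Convex ℝ S := by
    have hS : S = (fun t : ℂ => t • (b - c)) ⁻¹' ball 0 r := by
      ext t
      simp [S, AffineMap.lineMap_apply]
    rw [hS]
    exact (convex_ball (0 : E) r).is_linear_preimage
      ⟨fun s t => add_smul s t (b - c), fun s t => smul_assoc s t (b - c)⟩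
  have hd : DifferentiableOn ℂ (fun t : ℂ => h (AffineMap.lineMap c b t)) S :=
    hh.comp hline.differentiableOn fun t ht => ht
  have h0S : (0 : ℂ) ∈ S := by simpa [S] using pos_of_mem_ball hb
  have h1S : (1 : ℂ) ∈ S := by simpa [S] using hb
  simpa using (hd.analyticOnNhd
    (isOpen_ball.preimage hline.continuous)).eqOn_zero_of_preconnected_of_eventuallyEq_zero
      hSconv.isPreconnected h0S h0 h1S

variable [FiniteDimensional ℂ E] [l.NeBot] {f : ι → E → ℂ} {g : E → ℂ} {U : Set E}

theorem eventually_eq_zero_of_tendstoLocallyUniformlyOn (hU : IsOpen U)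
    (hf : EventuallyHolomorphicOn f l U) (hg : TendstoLocallyUniformlyOn f g l U) {z : E}
    (hz : z ∈ U) (hne : ∀ᶠ p in l ×ˢ 𝓝 z, f p.1 p.2 ≠ 0) (hgz : g z = 0) :
    ∀ᶠ y in 𝓝 z, g y = 0 := by
  have hgd : DifferentiableOn ℂ g U := differentiableOn_of_tendstoLocallyUniformlyOn hU hf hg
  obtain ⟨r, hr, hrU⟩ := Metric.isOpen_iff.mp hU z hz
  filter_upwards [ball_mem_nhds z hr] with b hb
  refine eq_zero_of_eventually_lineMap_eq_zero (hgd.mono hrU) hb ?_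
  have hline : Differentiable ℂ (AffineMap.lineMap z b : ℂ → E) :=
    fun t => AffineMap.hasDerivAt_lineMap.differentiableAt
  set S : Set ℂ := AffineMap.lineMap z b ⁻¹' U
  have hS : IsOpen S := hU.preimage hline.continuous
  have h0S : (0 : ℂ) ∈ S := by simpa [S] using hz
  have htend : ∀ t, Tendsto (fun p : ι × ℂ => (p.1, (AffineMap.lineMap z b p.2 : E)))
      (l ×ˢ 𝓝 t) (l ×ˢ 𝓝 (AffineMap.lineMap z b t)) := fun t =>
    tendsto_id.prodMap (hline.continuous.tendsto t)
  have hfS : EventuallyHolomorphicOn (fun i t => f i (AffineMap.lineMap z b t)) l S := fun t ht =>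
    ((htend t).eventually (hf _ ht)).mono fun p hp => hp.comp p.2 (hline p.2)
  have hgS : TendstoLocallyUniformlyOn (fun i t => f i (AffineMap.lineMap z b t))
      (fun t => g (AffineMap.lineMap z b t)) l S :=
    hg.comp _ (fun t ht => ht) hline.continuous.continuousOn
  have hgS0 : AnalyticAt ℂ (fun t : ℂ => g (AffineMap.lineMap z b t)) 0 :=
    (hgd.comp hline.differentiableOn fun t ht => ht).analyticAt (hS.mem_nhds h0S)
  refine hgS0.eventually_eq_zero_or_eventually_ne_zero.resolve_right fun hisol => ?_
  have hneS : ∀ᶠ p in l ×ˢ 𝓝 (0 : ℂ), f p.1 (AffineMap.lineMap z b p.2) ≠ 0 :=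
    (htend 0).eventually (by simpa using hne)
  obtain ⟨R, hR, hneR⟩ := eventually_prod_nhds_iff_ball.mp hneS
  obtain ⟨i, ⟨t, ht, hft⟩, hi⟩ := ((eventually_exists_eq_zero_of_tendstoLocallyUniformlyOn hS hfS
    hgS h0S (by simpa using hgz) hisol (ball_mem_nhds 0 hR)).and hneR).exists
  exact hi t ht hft

theorem ne_zero_of_tendstoLocallyUniformlyOn (hU : IsOpen U) (hUc : IsPreconnected U)
    (hf : EventuallyHolomorphicOn f l U) (hg : TendstoLocallyUniformlyOn f g l U)
    (hne : ∀ z ∈ U, ∀ᶠ p in l ×ˢ 𝓝 z, f p.1 p.2 ≠ 0) {p : E} (hp : p ∈ U) (hgp : g p ≠ 0)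
    {z : E} (hz : z ∈ U) : g z ≠ 0 := by
  have hgd : DifferentiableOn ℂ g U := differentiableOn_of_tendstoLocallyUniformlyOn hU hf hg
  have hnonzero : IsOpen (U ∩ g ⁻¹' {0}ᶜ) :=
    hgd.continuousOn.isOpen_inter_preimage hU isOpen_compl_singleton
  have hzero : IsOpen {y | ∀ᶠ x in 𝓝 y, g x = 0} := isOpen_setOfPred_eventually_nhds
  refine (hUc.subset_left_of_subset_union hnonzero hzero ?_ ?_ ⟨p, hp, hp, hgp⟩ hz).2
  · exact disjoint_left.mpr fun y hy hy0 => hy.2 hy0.self_of_nhds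
  · intro y hy
    rcases eq_or_ne (g y) 0 with hgy | hgy
    · exact .inr (eventually_eq_zero_of_tendstoLocallyUniformlyOn hU hf hg hy (hne y hy) hgy)
    · exact .inl ⟨hy, hgy⟩

end Hurwitz

section Osgood

variable {E F : Type*} [NormedAddCommGroup E] [NormedSpace ℂ E]
  [NormedAddCommGroup F] [NormedSpace ℂ F]

theorem not_injOn_of_eventually_hasFDerivAt_zero [Nontrivial E] {f : E → F} {V : Set E} {a : E}
    (hV : V ∈ 𝓝 a) (hf : ∀ᶠ z in 𝓝 a, HasFDerivAt f (0 : E →L[ℂ] F) z) : ¬ InjOn f V := by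
  intro hinj
  obtain ⟨r, hr, hrV⟩ := Metric.eventually_nhds_iff_ball.mp (hf.and (eventually_mem_set.mpr hV))
  have : (𝓝[≠] a).NeBot := Module.punctured_nhds_neBot ℂ E a
  obtain ⟨b, hb, hba⟩ := ((eventually_nhdsWithin_of_eventually_nhds
    (ball_mem_nhds a hr)).and (eventually_mem_nhdsWithin (s := {a}ᶜ))).exists
  have hconst : f b = f a := isOpen_ball.is_const_of_fderiv_eq_zero
    (convex_ball a r).isPreconnected
    (fun z hz => (hrV z hz).1.differentiableAt.differentiableWithinAt)
    (fun z hz => (hrV z hz).1.fderiv) hb (mem_ball_self hr)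
  exact hba (hinj (hrV b hb).2 (mem_of_mem_nhds hV) hconst)

theorem nhds_le_map_nhds_of_injOn {f : ℂ → ℂ} {U : Set ℂ} (hU : IsOpen U)
    (hf : DifferentiableOn ℂ f U) (hinj : InjOn f U) {z : ℂ} (hz : z ∈ U) :
    𝓝 (f z) ≤ map f (𝓝 z) := by
  refine (hf.analyticAt (hU.mem_nhds hz)).eventually_constant_or_nhds_le_map_nhds.resolve_left
    fun hconst => ?_
  obtain ⟨w, ⟨hw, hwU⟩, hwz⟩ := ((eventually_nhdsWithin_of_eventually_nhds
    (hconst.and (hU.mem_nhds hz))).and (eventually_mem_nhdsWithin (s := {z}ᶜ))).exists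
  exact hwz (hinj hwU hz hw)

theorem deriv_ne_zero_of_injOn {f : ℂ → ℂ} {U : Set ℂ} (hU : IsOpen U)
    (hf : DifferentiableOn ℂ f U) (hinj : InjOn f U) {a : ℂ} (ha : a ∈ U) : deriv f a ≠ 0 := by
  -- The inverse of `f` is continuous, and holomorphic off the isolated critical values of `f`;
  -- it is therefore holomorphic at `f a` as well, and the chain rule applies.
  have hd : ∀ z ∈ U, HasDerivAt f (deriv f z) z := fun z hz =>
    (hf.differentiableAt (hU.mem_nhds hz)).hasDerivAt
  have hle : ∀ z ∈ U, 𝓝 (f z) ≤ map f (𝓝 z) := fun z hz => nhds_le_map_nhds_of_injOn hU hf hinj hz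
  set g := Function.invFunOn f U
  have hgf : ∀ z ∈ U, g (f z) = z := fun z hz => hinj.leftInvOn_invFunOn hz
  have hgf_ev : ∀ z ∈ U, ∀ᶠ w in 𝓝 z, g (f w) = w := fun z hz => (hU.eventually_mem hz).mono hgf
  have hgc : ∀ z ∈ U, ContinuousAt g (f z) := by
    intro z hz
    rw [ContinuousAt, hgf z hz]
    exact (tendsto_map'_iff.mpr (tendsto_id.congr'
      ((hgf_ev z hz).mono fun w hw => hw.symm))).mono_left (hle z hz)
  have hgd : ∀ z ∈ U, deriv f z ≠ 0 → DifferentiableAt ℂ g (f z) := by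
    intro z hz hne
    refine (HasDerivAt.of_local_left_inverse (hgc z hz)
      (by rw [hgf z hz]; exact hd z hz) hne (hle z hz ?_)).differentiableAt
    exact (hgf_ev z hz).mono fun w hw => congrArg f hw
  have hcrit : ∀ᶠ z in 𝓝[≠] a, deriv f z ≠ 0 := by
    refine ((hf.deriv hU).analyticAt
      (hU.mem_nhds ha)).eventually_eq_zero_or_eventually_ne_zero.resolve_left fun h0 => ?_
    refine not_injOn_of_eventually_hasFDerivAt_zero (hU.mem_nhds ha) ?_ hinj
    filter_upwards [h0, hU.eventually_mem ha] with z hz hzU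
    simpa [hz] using (hd z hzU).hasFDerivAt
  obtain ⟨s, hs, hsU⟩ : ∃ s ∈ 𝓝 (f a), ∀ w ∈ s, w ≠ f a → DifferentiableAt ℂ g w := by
    refine ⟨_, hle a ha (image_mem_map ((eventually_nhdsWithin_iff.mp hcrit).and
      (hU.eventually_mem ha))), ?_⟩
    rintro _ ⟨z, ⟨hz, hzU⟩, rfl⟩ hne
    exact hgd z hzU (hz fun h => hne (congrArg f h))
  have hga : DifferentiableAt ℂ g (f a) :=
    ((Complex.differentiableOn_compl_singleton_and_continuousAt_iff hs).mp
      ⟨fun w hw => (hsU w hw.1 hw.2).differentiableWithinAt, hgc a ha⟩).differentiableAt hs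
  have hchain : deriv g (f a) * deriv f a = 1 :=
    (hga.hasDerivAt.comp a (hd a ha)).unique ((hasDerivAt_id a).congr_of_eventuallyEq (hgf_ev a ha))
  exact right_ne_zero_of_mul (hchain ▸ one_ne_zero)

theorem deriv_comp_prodMk_left {h : E × ℂ → F} {p : E × ℂ} (hh : DifferentiableAt ℂ h p) :
    deriv (fun t => h (p.1, t)) p.2 = fderiv ℂ h p (0, 1) := by
  have hslice : HasDerivAt (fun t => (p.1, t)) ((0 : E), (1 : ℂ)) p.2 :=
    (hasDerivAt_const _ _).prodMk (hasDerivAt_id _)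
  exact (HasFDerivAt.comp_hasDerivAt p.2 (l := h) hh.hasFDerivAt hslice).deriv

section ZeroSets

variable {W : Set (E × ℂ)} {h : E × ℂ → ℂ}

theorem eventually_exists_mem_zero_set (hW : IsOpen W) (hh : DifferentiableOn ℂ h W) {b : E × ℂ}
    (hb : b ∈ W) (hhb : h b = 0) (hne : ∀ᶠ t in 𝓝[≠] b.2, h (b.1, t) ≠ 0) {V : Set (E × ℂ)}
    (hV : V ∈ 𝓝 b) : ∀ᶠ s in 𝓝 b.1, ∃ t, (s, t) ∈ V ∧ h (s, t) = 0 := by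
  have hd : ∀ p ∈ W, DifferentiableAt ℂ h p := fun p hp => hh.differentiableAt (hW.mem_nhds hp)
  set S : Set ℂ := {t | (b.1, t) ∈ W}
  have hS : IsOpen S := hW.preimage (by fun_prop)
  have hhol : EventuallyHolomorphicOn (fun s t => h (s, t)) (𝓝 b.1) S := by
    intro t ht
    rw [← nhds_prod_eq]
    filter_upwards [hW.mem_nhds ht] with p hp
    exact (hd p hp).comp p.2 (by fun_prop)
  have hlim : TendstoLocallyUniformlyOn (fun s t => h (s, t)) (fun t => h (b.1, t)) (𝓝 b.1) S := by
    refine (tendstoLocallyUniformlyOn_iff_tendsto_prod_nhds hS ?_).mpr fun t ht => ?_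
    · exact hh.continuousOn.comp (by fun_prop) fun t ht => ht
    · rw [← nhds_prod_eq]
      exact (hd _ ht).continuousAt
  obtain ⟨A, hA, B, hB, hAB⟩ := mem_nhds_prod_iff.mp hV
  filter_upwards [hA, eventually_exists_eq_zero_of_tendstoLocallyUniformlyOn hS hhol hlim
    (z := b.2) hb hhb hne hB] with s hs ⟨t, ht, hst⟩
  exact ⟨t, hAB ⟨hs, ht⟩, hst⟩

variable [FiniteDimensional ℂ E]

theorem differentiableOn_iteratedDeriv_snd (hW : IsOpen W) (hh : DifferentiableOn ℂ h W) (k : ℕ) :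
    DifferentiableOn ℂ (fun p => iteratedDeriv k (fun t => h (p.1, t)) p.2) W := by
  induction k with
  | zero => simpa using hh
  | succ k ih =>
    refine (differentiableOn_fderiv_apply hW ih (0, 1)).congr fun p hp => ?_
    rw [iteratedDeriv_succ]
    exact deriv_comp_prodMk_left (ih.differentiableAt (hW.mem_nhds hp))

theorem exists_fderiv_ne_zero_of_eq_zero_on_zero_set (hW : IsOpen W) (hh : DifferentiableOn ℂ h W)
    {p₀ : E × ℂ} (hp₀ : p₀ ∈ W) (hhp₀ : h p₀ = 0) (hne : ¬ ∀ᶠ t in 𝓝 p₀.2, h (p₀.1, t) = 0) :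
    ∃ g : E × ℂ → ℂ, DifferentiableOn ℂ g W ∧ (∀ p ∈ W, h p = 0 → g p = 0) ∧
      ∃ b ∈ W, h b = 0 ∧ fderiv ℂ g b (0, 1) ≠ 0 := by
  -- `b` is a zero of minimal vertical order `m + 1` and `g = ∂ᵗ^m h`.
  set g : ℕ → E × ℂ → ℂ := fun k p => iteratedDeriv k (fun t => h (p.1, t)) p.2
  have hgd : ∀ k, DifferentiableOn ℂ (g k) W := differentiableOn_iteratedDeriv_snd hW hh
  have hg0 : ∀ p, g 0 p = h p := fun p => by simp [g]
  have hex : ∃ k, ∃ p ∈ W, h p = 0 ∧ g k p ≠ 0 := by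
    by_contra! hall
    have hanal : AnalyticAt ℂ (fun t => h (p₀.1, t)) p₀.2 := by
      rw [Complex.analyticAt_iff_eventually_differentiableAt]
      have hslice : ContinuousAt (fun t => (p₀.1, t)) p₀.2 := by fun_prop
      filter_upwards [hslice.eventually_mem (hW.mem_nhds hp₀)] with t ht
      exact (hh.differentiableAt (hW.mem_nhds ht)).comp t (by fun_prop)
    refine hne (analyticOrderAt_eq_top.mp (ENat.eq_top_iff_forall_ge.mpr fun n => ?_))
    rw [natCast_le_analyticOrderAt_iff_iteratedDeriv_eq_zero hanal]
    exact fun i _ => hall i p₀ hp₀ hhp₀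
  classical
  obtain ⟨b, hb, hhb, hgb⟩ := Nat.find_spec hex
  obtain ⟨m, hm⟩ : ∃ m, Nat.find hex = m + 1 :=
    Nat.exists_eq_succ_of_ne_zero fun h0 => hgb (by rw [h0, hg0, hhb])
  refine ⟨g m, hgd m, fun p hp hhp => ?_, b, hb, hhb, ?_⟩
  · by_contra hgp
    exact Nat.find_min hex (m := m) (by omega) ⟨p, hp, hhp, hgp⟩
  · rw [← deriv_comp_prodMk_left ((hgd m).differentiableAt (hW.mem_nhds hb))]
    rw [hm] at hgb
    exact (congrFun iteratedDeriv_succ b.2).symm.trans_ne hgb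

theorem exists_graph_subset_zero_set (hW : IsOpen W) (hh : DifferentiableOn ℂ h W)
    {g : E × ℂ → ℂ} (hg : DifferentiableOn ℂ g W) (hgh : ∀ p ∈ W, h p = 0 → g p = 0)
    {b : E × ℂ} (hb : b ∈ W) (hhb : h b = 0) (hgb : fderiv ℂ g b (0, 1) ≠ 0) :
    ∃ ψ : E → ℂ, ∀ᶠ s in 𝓝 b.1, DifferentiableAt ℂ ψ s ∧ (s, ψ s) ∈ W ∧ h (s, ψ s) = 0 := by
  have : CompleteSpace E := FiniteDimensional.complete ℂ E
  have hcont : ContDiffAt ℂ 1 g b := (contDiffOn_one_of_differentiableOn hW hg).contDiffAt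
    (hW.mem_nhds hb)
  have hinv : (fderiv ℂ g b ∘L .inr ℂ E ℂ).IsInvertible := by
    refine ⟨ContinuousLinearEquiv.unitsEquivAut ℂ (Units.mk0 _ hgb), ?_⟩
    ext
    simp
  set ψ := hcont.implicitFunction one_ne_zero hinv
  have hψd : ∀ᶠ s in 𝓝 b.1, DifferentiableAt ℂ ψ s :=
    ((hcont.contDiffAt_implicitFunction one_ne_zero hinv).eventually (by simp)).mono
      fun s hs => hs.differentiableAt one_ne_zero
  have hψ : ∀ᶠ p in 𝓝 b, g p = 0 → ψ p.1 = p.2 := by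
    filter_upwards [hcont.eventually_apply_eq_iff_implicitFunction one_ne_zero hinv] with p hp hgp
    exact hp.mp (hgp.trans (hgh b hb hhb).symm)
  have hisol : ∀ᶠ t in 𝓝[≠] b.2, h (b.1, t) ≠ 0 := by
    have hslice : HasDerivAt (fun t => g (b.1, t)) (fderiv ℂ g b (0, 1)) b.2 := by
      have hgdiff := hg.differentiableAt (hW.mem_nhds hb)
      rw [← deriv_comp_prodMk_left hgdiff]
      exact (DifferentiableAt.comp (g := g) b.2 hgdiff (by fun_prop)).hasDerivAt
    have hbW : ∀ᶠ t in 𝓝[≠] b.2, (b.1, t) ∈ W := nhdsWithin_le_nhds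
      ((by fun_prop : Continuous fun t => (b.1, t)).continuousAt.eventually_mem (hW.mem_nhds hb))
    filter_upwards [hslice.eventually_ne (c := 0) hgb, hbW] with t ht htW hht
    exact ht (hgh _ htW hht)
  refine ⟨ψ, ?_⟩
  filter_upwards [hψd, eventually_exists_mem_zero_set hW hh hb hhb hisol
    (hψ.and (hW.eventually_mem hb))] with s hs ⟨t, ⟨ht, htW⟩, hst⟩
  obtain rfl : ψ s = t := ht (hgh _ htW hst)
  exact ⟨hs, htW, hst⟩

theorem not_injOn_of_fderiv_eq_zero_on_zero_set [Nontrivial E] (hW : IsOpen W)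
    (hh : DifferentiableOn ℂ h W) {f : E × ℂ → F} (hf : DifferentiableOn ℂ f W)
    (hf0 : ∀ p ∈ W, h p = 0 → fderiv ℂ f p = 0) {p₀ : E × ℂ} (hp₀ : p₀ ∈ W) (hhp₀ : h p₀ = 0)
    (hne : ¬ ∀ᶠ t in 𝓝 p₀.2, h (p₀.1, t) = 0) : ¬ InjOn f W := by
  intro hinj
  obtain ⟨g, hg, hgh, b, hb, hhb, hgb⟩ :=
    exists_fderiv_ne_zero_of_eq_zero_on_zero_set hW hh hp₀ hhp₀ hne
  obtain ⟨ψ, hψ⟩ := exists_graph_subset_zero_set hW hh hg hgh hb hhb hgb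
  refine not_injOn_of_eventually_hasFDerivAt_zero (f := fun s => f (s, ψ s)) hψ ?_ ?_
  · filter_upwards [hψ] with s ⟨hψs, hsW, hs0⟩
    have hcomp := HasFDerivAt.comp s (g := f)
      (hf.differentiableAt (hW.mem_nhds hsW)).hasFDerivAt
      ((hasFDerivAt_id s).prodMk hψs.hasFDerivAt)
    rwa [hf0 _ hsW hs0, ContinuousLinearMap.zero_comp] at hcomp
  · intro s hs t ht hst
    exact congrArg Prod.fst (hinj hs.2.1 ht.2.1 hst)

end ZeroSets

theorem det_ne_zero_iff_injective [FiniteDimensional ℂ E] {A : E →L[ℂ] E} :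
    A.det ≠ 0 ↔ Function.Injective A :=
  LinearMap.det_eq_zero_iff_ker_ne_bot.not_left.trans LinearMap.ker_eq_bot

theorem differentiableOn_det_fderiv [FiniteDimensional ℂ E] {f : E → E} {U : Set E}
    (hU : IsOpen U) (hf : DifferentiableOn ℂ f U) :
    DifferentiableOn ℂ (fun z => (fderiv ℂ f z).det) U := by
  have : CompleteSpace E := FiniteDimensional.complete ℂ E
  set b := Module.finBasis ℂ E
  have hentry : ∀ i j, DifferentiableOn ℂ (fun z => b.equivFunL (fderiv ℂ f z (b j)) i) U :=
    fun i j => differentiableOn_pi.mp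
      (b.equivFunL.differentiable.comp_differentiableOn (differentiableOn_fderiv_apply hU hf _)) i
  have hdet : ∀ z, (fderiv ℂ f z).det = ∑ σ : Equiv.Perm (Fin (Module.finrank ℂ E)),
      (Equiv.Perm.sign σ : ℂ) * ∏ j, b.equivFunL (fderiv ℂ f z (b j)) (σ j) := by
    intro z
    rw [ContinuousLinearMap.det, ← LinearMap.det_toMatrix b, Matrix.det_apply']
    simp [LinearMap.toMatrix_apply]
  simp only [hdet]
  exact .fun_sum fun σ _ => .const_mul (fun z hz => (HasFDerivWithinAt.finsetProd fun j _ =>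
    (hentry _ j z hz).hasFDerivWithinAt).differentiableWithinAt) _

theorem exists_parametrization_level_set [CompleteSpace E] [FiniteDimensional ℂ F] {f : E → F}
    {f' : E →L[ℂ] F} {a : E} (hf : ContDiffAt ℂ 1 f a) (hf' : HasFDerivAt f f' a)
    (hsurj : f'.range = ⊤) :
    ∃ γ : f'.ker → E, γ 0 = a ∧ HasFDerivAt γ f'.ker.subtypeL 0 ∧
      ∃ V ∈ 𝓝 0, DifferentiableOn ℂ γ V ∧ InjOn γ V ∧ ∀ k ∈ V, f (γ k) = f a := by
  have : CompleteSpace F := FiniteDimensional.complete ℂ F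
  have hstrict : HasStrictFDerivAt f f' a := hf.hasStrictFDerivAt' hf' one_ne_zero
  have hker := f'.ker_closedComplemented_of_finiteDimensional_range
  set φ := hstrict.implicitFunctionDataOfComplemented f f' hsurj hker
  have hpt : φ.prodFun φ.pt = (f a, 0) := by simp [φ]
  have hline : ContinuousAt (fun k : f'.ker => (f a, k)) 0 := by fun_prop
  have hproj : ContDiffAt ℂ 1 φ.rightFun φ.pt := by
    change ContDiffAt ℂ 1 (fun x => Classical.choose hker (x - a)) a
    fun_prop
  have hsmooth : ContDiffAt ℂ 1 φ.implicitFunction.uncurry (f a, 0) :=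
    hpt ▸ φ.contDiffAt_implicitFunction hf hproj one_ne_zero
  have hleft : ∀ᶠ k in 𝓝 (0 : f'.ker), φ.leftFun (φ.implicitFunction (f a) k) = f a :=
    hline.eventually (hpt ▸ φ.leftFun_implicitFunction)
  have hright : ∀ᶠ k in 𝓝 (0 : f'.ker), φ.rightFun (φ.implicitFunction (f a) k) = k :=
    hline.eventually (hpt ▸ φ.rightFun_implicitFunction)
  have hdiff : ∀ᶠ k in 𝓝 (0 : f'.ker), DifferentiableAt ℂ (φ.implicitFunction (f a)) k := by
    filter_upwards [hline.eventually (hsmooth.eventually (by simp))] with k hk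
    exact (hk.differentiableAt one_ne_zero).comp k (by fun_prop)
  refine ⟨φ.implicitFunction (f a), ?_,
    (hstrict.to_implicitFunctionOfComplemented hsurj hker).hasFDerivAt, _,
    (hleft.and hright).and hdiff, fun k hk => hk.2.differentiableWithinAt, ?_,
    fun k hk => hk.1.1⟩
  · simpa [φ] using φ.implicitFunction_apply_image.self_of_nhds
  · intro k hk k' hk' h
    rw [← hk.1.2, ← hk'.1.2, h]

theorem finrank_ker_add_one_of_ne_zero [FiniteDimensional ℂ E] {φ : E →L[ℂ] ℂ} (hφ : φ ≠ 0) :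
    Module.finrank ℂ φ.ker + 1 = Module.finrank ℂ E :=
  Module.Dual.finrank_ker_add_one_of_ne_zero
    fun h => hφ (ContinuousLinearMap.coe_injective h)

theorem exists_prod_ker_injective [FiniteDimensional ℂ E] {φ χ : E →L[ℂ] ℂ}
    (hφ : φ ≠ 0) (hχ : χ ≠ 0) : ∃ π : E →L[ℂ] χ.ker, Function.Injective (φ.prod π) := by
  obtain ⟨p, hp⟩ := φ.ker_closedComplemented_of_finiteDimensional_range
  have hfinrank := finrank_ker_add_one_of_ne_zero hφ
  rw [← finrank_ker_add_one_of_ne_zero hχ, add_left_inj] at hfinrank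
  let e : φ.ker ≃L[ℂ] χ.ker := .ofFinrankEq hfinrank
  refine ⟨(e : φ.ker →L[ℂ] χ.ker) ∘L p, (injective_iff_map_eq_zero _).mpr fun x hx => ?_⟩
  obtain ⟨hx₁, hx₂⟩ : φ x = 0 ∧ e (p x) = 0 := Prod.mk_eq_zero.mp hx
  have hpx : p x = 0 := e.map_eq_zero_iff.mp hx₂
  exact congrArg Subtype.val ((hp ⟨x, hx₁⟩).symm.trans hpx)

theorem fderiv_injective_of_fderiv_ne_zero [FiniteDimensional ℂ E] {n : ℕ}
    (hn : Module.finrank ℂ E = n + 1)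
    (ih : ∀ (K : Submodule ℂ E), Module.finrank ℂ K = n → ∀ (f : K → K) (U : Set K), IsOpen U →
      DifferentiableOn ℂ f U → InjOn f U → ∀ a ∈ U, Function.Injective (fderiv ℂ f a))
    {f : E → E} {U : Set E} (hU : IsOpen U) (hf : DifferentiableOn ℂ f U) (hinj : InjOn f U)
    {a : E} (ha : a ∈ U) (hne : fderiv ℂ f a ≠ 0) : Function.Injective (fderiv ℂ f a) := by
  -- Restrict `f` to a level set of a component `ℓ ∘ f` that is nonsingular at `a`.
  have : CompleteSpace E := FiniteDimensional.complete ℂ E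
  obtain ⟨x, hx⟩ := ContinuousLinearMap.exists_ne_zero hne
  obtain ⟨ℓ, hℓ⟩ := SeparatingDual.exists_ne_zero (R := ℂ) hx
  have hfa : HasFDerivAt f (fderiv ℂ f a) a := (hf.differentiableAt (hU.mem_nhds ha)).hasFDerivAt
  set L := fderiv ℂ f a
  have hℓL : ℓ ∘L L ≠ 0 := fun h => hℓ (DFunLike.congr_fun h x)
  obtain ⟨γ, hγ0, hγ', V, hV, hγV, hγinj, hγℓ⟩ := exists_parametrization_level_set
    (ℓ.contDiff.contDiffAt.comp a ((contDiffOn_one_of_differentiableOn hU hf).contDiffAt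
      (hU.mem_nhds ha))) (ℓ.hasFDerivAt.comp a hfa)
    (LinearMap.range_eq_top.mpr (LinearMap.surjective
      fun h => hℓL (ContinuousLinearMap.coe_injective h)))
  obtain ⟨π, hπ⟩ := exists_prod_ker_injective (φ := ℓ) (fun h => hℓ (by simp [h])) hℓL
  obtain ⟨W, hWsub, hW, h0W⟩ := _root_.mem_nhds_iff.mp (inter_mem hV
    (hγ'.continuousAt.preimage_mem_nhds (hγ0.symm ▸ hU.mem_nhds ha)))
  have hL : Function.Injective (fderiv ℂ (π ∘ f ∘ γ) 0) := by
    refine ih _ (by have := finrank_ker_add_one_of_ne_zero hℓL; omega) _ W hW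
      (π.differentiable.comp_differentiableOn (hf.comp (hγV.mono fun k hk => (hWsub hk).1)
        fun k hk => (hWsub hk).2)) (fun k hk k' hk' h => ?_) 0 h0W
    have hconst : ℓ (f (γ k)) = ℓ (f (γ k')) :=
      (hγℓ k (hWsub hk).1).trans (hγℓ k' (hWsub hk').1).symm
    exact hγinj (hWsub hk).1 (hWsub hk').1 (hinj (hWsub hk).2 (hWsub hk').2
      (hπ (Prod.ext hconst h)))
  have hderiv : HasFDerivAt (π ∘ f ∘ γ) (π ∘L L ∘L (ℓ ∘L L).ker.subtypeL) 0 :=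
    π.hasFDerivAt.comp 0 ((hγ0.symm ▸ hfa).comp 0 hγ')
  rw [hderiv.fderiv, injective_iff_map_eq_zero] at hL
  rw [injective_iff_map_eq_zero]
  intro y hy
  have hπy : π (L y) = 0 := by rw [hy, map_zero]
  exact congrArg Subtype.val (hL ⟨y, by simp [hy]⟩ hπy)

theorem fderiv_ne_zero_of_injOn_of_finrank_eq_one (h1 : Module.finrank ℂ E = 1)
    {f : E → E} {U : Set E} (hU : IsOpen U) (hf : DifferentiableOn ℂ f U) (hinj : InjOn f U)
    {a : E} (ha : a ∈ U) : fderiv ℂ f a ≠ 0 := by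
  intro h0
  have : FiniteDimensional ℂ E := .of_finrank_pos (by omega)
  let e : E ≃L[ℂ] ℂ := .ofFinrankEq (by simp [h1])
  have hV : IsOpen (e.symm ⁻¹' U) := hU.preimage e.symm.continuous
  have haV : e a ∈ e.symm ⁻¹' U := by simpa using ha
  refine deriv_ne_zero_of_injOn hV (f := e ∘ f ∘ e.symm) ?_ ?_ haV ?_
  · exact e.differentiable.comp_differentiableOn
      (hf.comp e.symm.differentiable.differentiableOn fun t ht => ht)
  · exact e.injective.comp_injOn (hinj.comp e.symm.injective.injOn fun t ht => ht)
  · have hfa : HasFDerivAt f (0 : E →L[ℂ] E) (e.symm (e a)) := by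
      simpa [h0] using (hf.differentiableAt (hU.mem_nhds ha)).hasFDerivAt
    have hcomp := e.hasFDerivAt.comp (e a) (hfa.comp (e a) e.symm.hasFDerivAt)
    simp [← fderiv_apply_one_eq_deriv, hcomp.fderiv]

theorem exists_injective_prod_of_one_lt_finrank (h1 : 1 < Module.finrank ℂ E) {v : E}
    (hv : v ≠ 0) : ∃ A : ℂ × ℂ →L[ℂ] E, Function.Injective A ∧ ∀ t, A (0, t) = t • v := by
  obtain ⟨u, hu⟩ := exists_linearIndependent_pair_of_one_lt_finrank h1 hv
  refine ⟨(ContinuousLinearMap.toSpanSingleton ℂ u).coprod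
    (ContinuousLinearMap.toSpanSingleton ℂ v), ?_, by simp⟩
  rw [injective_iff_map_eq_zero]
  rintro ⟨s, t⟩ hst
  rw [ContinuousLinearMap.coprod_apply, add_comm] at hst
  obtain ⟨rfl, rfl⟩ := LinearIndependent.pair_iff.mp hu t s hst
  rfl

theorem fderiv_ne_zero_of_injOn_of_one_lt_finrank [FiniteDimensional ℂ E]
    (h1 : 1 < Module.finrank ℂ E) {f : E → E} {U : Set E} (hU : IsOpen U)
    (hf : DifferentiableOn ℂ f U) (hinj : InjOn f U)
    (hdich : ∀ z ∈ U, fderiv ℂ f z ≠ 0 → Function.Injective (fderiv ℂ f z))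
    {a : E} (ha : a ∈ U) : fderiv ℂ f a ≠ 0 := by
  intro h0
  have : Nontrivial E := Module.nontrivial_of_finrank_pos (R := ℂ) (by omega)
  have hdet0 : ∀ z ∈ U, (fderiv ℂ f z).det = 0 → fderiv ℂ f z = 0 := by
    intro z hz hz0
    by_contra hne
    exact det_ne_zero_iff_injective.mpr (hdich z hz hne) hz0
  have hdeta : (fderiv ℂ f a).det = 0 := by
    simp [h0, ContinuousLinearMap.det]
  obtain ⟨r, hr, hrU⟩ := Metric.isOpen_iff.mp hU a ha
  obtain ⟨b, hb, hbdet⟩ : ∃ b ∈ ball a r, (fderiv ℂ f b).det ≠ 0 := by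
    by_contra! hall
    refine not_injOn_of_eventually_hasFDerivAt_zero (hU.mem_nhds ha) ?_ hinj
    filter_upwards [ball_mem_nhds a hr] with z hz
    rw [← hdet0 z (hrU hz) (hall z hz)]
    exact (hf.differentiableAt (hU.mem_nhds (hrU hz))).hasFDerivAt
  have hab : b - a ≠ 0 := by
    rw [sub_ne_zero]
    rintro rfl
    exact hbdet hdeta
  obtain ⟨A, hA, hAab⟩ := exists_injective_prod_of_one_lt_finrank h1 hab
  have hφ : Differentiable ℂ fun p => A p + a := by fun_prop
  have hdetd := differentiableOn_det_fderiv hU hf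
  refine not_injOn_of_fderiv_eq_zero_on_zero_set (p₀ := 0) (f := fun p => f (A p + a))
    (h := fun p => (fderiv ℂ f (A p + a)).det) (hU.preimage hφ.continuous)
    (hdetd.comp hφ.differentiableOn fun p hp => hp)
    (hf.comp hφ.differentiableOn fun p hp => hp) (fun p hp hp0 => ?_) ?_ ?_ (fun hev => ?_) ?_
  · have hfp := (hf.differentiableAt (hU.mem_nhds hp)).hasFDerivAt
    rw [hdet0 _ hp hp0] at hfp
    exact (hfp.comp p (A.hasFDerivAt.add_const a)).fderiv.trans (ContinuousLinearMap.zero_comp _)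
  · simpa using ha
  · simpa using hdeta
  · refine hbdet (eq_zero_of_eventually_lineMap_eq_zero
      (h := fun z => (fderiv ℂ f z).det) (hdetd.mono hrU) hb ?_)
    simpa [AffineMap.lineMap_apply, hAab] using hev
  · exact hinj.comp ((add_left_injective a).comp hA).injOn fun p hp => hp

end Osgood

theorem fderiv_injective_of_injOn {E : Type*} [NormedAddCommGroup E] [NormedSpace ℂ E]
    [FiniteDimensional ℂ E] {f : E → E} {U : Set E} (hU : IsOpen U)
    (hf : DifferentiableOn ℂ f U) (hinj : InjOn f U) {a : E} (ha : a ∈ U) :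
    Function.Injective (fderiv ℂ f a) := by
  induction hn : Module.finrank ℂ E generalizing E with
  | zero =>
    have := Module.finrank_zero_iff.mp hn
    exact Function.injective_of_subsingleton _
  | succ n ih =>
    have hdich : ∀ z ∈ U, fderiv ℂ f z ≠ 0 → Function.Injective (fderiv ℂ f z) := fun z hz =>
      fderiv_injective_of_fderiv_ne_zero hn
        (fun K hK g V hV hg hginj b hb => ih hV hg hginj hb hK) hU hf hinj hz
    refine hdich a ha ?_
    rcases Nat.eq_zero_or_pos n with rfl | hpos
    · exact fderiv_ne_zero_of_injOn_of_finrank_eq_one hn hU hf hinj ha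
    · exact fderiv_ne_zero_of_injOn_of_one_lt_finrank (by omega) hU hf hinj hdich ha

section InjectiveHolomorphicMaps

variable {E : Type*} [NormedAddCommGroup E] [NormedSpace ℂ E]

theorem mem_image_closedBall_of_norm_fderiv_sub_le {F : Type*} [NormedAddCommGroup F]
    [NormedSpace ℂ F] [CompleteSpace E] {f : E → F} {z : E} {w : F} {ρ : ℝ} (e : E ≃L[ℂ] F)
    (hρ : 0 ≤ ρ) (hf : ∀ y ∈ closedBall z ρ, DifferentiableAt ℂ f y)
    (hf' : ∀ y ∈ closedBall z ρ, ‖fderiv ℂ f y - e‖ ≤ ‖(e.symm : F →L[ℂ] E)‖⁻¹ / 2)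
    (hw : dist w (f z) ≤ ‖(e.symm : F →L[ℂ] E)‖⁻¹ / 2 * ρ) : w ∈ f '' closedBall z ρ := by
  set c : NNReal := ‖(e.symm : F →L[ℂ] E)‖₊⁻¹ / 2
  have happrox : ApproximatesLinearOn f (e : E →L[ℂ] F) (closedBall z ρ) c := fun x hx y hy =>
    (convex_closedBall z ρ).norm_image_sub_le_of_norm_fderiv_le' (𝕜 := ℂ) hf hf' hy hx
  refine happrox.surjOn_closedBall_of_nonlinearRightInverse e.toNonlinearRightInverse hρ
    subset_rfl ?_
  have hc : (‖(e.symm : F →L[ℂ] E)‖₊ : ℝ)⁻¹ - c = c := by simp [c, sub_half]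
  change dist w (f z) ≤ ((‖(e.symm : F →L[ℂ] E)‖₊ : ℝ)⁻¹ - c) * ρ
  rwa [hc]

variable [FiniteDimensional ℂ E]

section LeftInverse

variable {f g : E → E} {U : Set E}

theorem exists_hasStrictFDerivAt_equiv_of_injOn (hU : IsOpen U) (hf : DifferentiableOn ℂ f U)
    (hinj : InjOn f U) {z : E} (hz : z ∈ U) :
    ∃ e : E ≃L[ℂ] E, HasStrictFDerivAt f (e : E →L[ℂ] E) z := by
  have : CompleteSpace E := FiniteDimensional.complete ℂ E
  have hdet : (fderiv ℂ f z).det ≠ 0 :=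
    det_ne_zero_iff_injective.mpr (fderiv_injective_of_injOn hU hf hinj hz)
  refine ⟨(fderiv ℂ f z).toContinuousLinearEquivOfDetNeZero hdet, ?_⟩
  rw [ContinuousLinearMap.coe_toContinuousLinearEquivOfDetNeZero]
  exact hasStrictFDerivAt_of_differentiableOn hU hf hz

theorem isOpen_image_of_injOn (hU : IsOpen U) (hf : DifferentiableOn ℂ f U) (hinj : InjOn f U) :
    IsOpen (f '' U) := by
  have : CompleteSpace E := FiniteDimensional.complete ℂ E
  refine isOpen_iff_mem_nhds.mpr ?_
  rintro _ ⟨z, hz, rfl⟩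
  obtain ⟨e, he⟩ := exists_hasStrictFDerivAt_equiv_of_injOn hU hf hinj hz
  rw [← he.map_nhds_eq_of_equiv]
  exact image_mem_map (hU.mem_nhds hz)

theorem differentiableOn_image_of_leftInvOn (hU : IsOpen U) (hf : DifferentiableOn ℂ f U)
    (hg : LeftInvOn g f U) : DifferentiableOn ℂ g (f '' U) := by
  have : CompleteSpace E := FiniteDimensional.complete ℂ E
  rintro _ ⟨z, hz, rfl⟩
  obtain ⟨e, he⟩ := exists_hasStrictFDerivAt_equiv_of_injOn hU hf hg.injOn hz
  exact (he.to_local_left_inverse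
    ((hU.eventually_mem hz).mono hg)).differentiableAt.differentiableWithinAt

end LeftInverse

section Limits

variable {ι : Type*} {l : Filter ι} {f g : ι → E → E} {F G : E → E} {U V D M : Set E}

theorem eventually_det_fderiv_ne_zero_of_leftInverse {z : E}
    (hf : ∀ᶠ p in l ×ˢ 𝓝 z, DifferentiableAt ℂ (f p.1) p.2)
    (hgf : ∀ᶠ p in l ×ˢ 𝓝 z, g p.1 (f p.1 p.2) = p.2) :
    ∀ᶠ p in l ×ˢ 𝓝 z, (fderiv ℂ (f p.1) p.2).det ≠ 0 := by
  obtain ⟨R, hR, hR'⟩ := eventually_prod_nhds_iff_ball.mp (hf.and hgf)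
  refine eventually_prod_nhds_iff_ball.mpr ⟨R, hR, hR'.mono fun i hi y hy => ?_⟩
  refine det_ne_zero_iff_injective.mpr (fderiv_injective_of_injOn isOpen_ball
    (fun x hx => (hi x hx).1.differentiableWithinAt) ?_ hy)
  exact LeftInvOn.injOn (f₁' := g i) fun x hx => (hi x hx).2

variable [l.NeBot]

theorem eventually_mem_image_of_tendstoLocallyUniformlyOn (hU : IsOpen U)
    (hf : EventuallyHolomorphicOn f l U) (hF : TendstoLocallyUniformlyOn f F l U) {z : E}
    (hz : z ∈ U) (hdet : (fderiv ℂ F z).det ≠ 0) {S : Set E} (hS : S ∈ 𝓝 z) :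
    ∀ᶠ i in l, F z ∈ f i '' S := by
  rcases subsingleton_or_nontrivial E with _ | _
  · exact .of_forall fun i => ⟨z, mem_of_mem_nhds hS, Subsingleton.elim _ _⟩
  have : CompleteSpace E := FiniteDimensional.complete ℂ E
  set e := (fderiv ℂ F z).toContinuousLinearEquivOfDetNeZero hdet
  have he : (e : E →L[ℂ] E) = fderiv ℂ F z :=
    ContinuousLinearMap.coe_toContinuousLinearEquivOfDetNeZero _ hdet
  have hc : 0 < ‖(e.symm : E →L[ℂ] E)‖⁻¹ / 2 := half_pos (inv_pos.mpr e.norm_symm_pos)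
  have hnear : ∀ᶠ p in l ×ˢ 𝓝 z, ‖fderiv ℂ (f p.1) p.2 - e‖ ≤ ‖(e.symm : E →L[ℂ] E)‖⁻¹ / 2 := by
    simpa only [he, mem_closedBall, dist_eq_norm] using
      (tendsto_fderiv_prod_nhds hU hf hF hz).eventually_mem (closedBall_mem_nhds _ hc)
  obtain ⟨R, hR, hfR⟩ := eventually_prod_nhds_iff_ball.mp ((hf z hz).and hnear)
  obtain ⟨ρ, hρ, hρS⟩ := nhds_basis_closedBall.mem_iff.mp (inter_mem hS (ball_mem_nhds z hR))
  filter_upwards [hfR, (hF.tendsto_at hz).eventually (ball_mem_nhds _ (mul_pos hc hρ))]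
    with i hi hiz
  refine image_mono (hρS.trans inter_subset_left)
    (mem_image_closedBall_of_norm_fderiv_sub_le e hρ.le (fun y hy => (hi y (hρS hy).2).1)
      (fun y hy => (hi y (hρS hy).2).2) ?_)
  rw [dist_comm]
  exact (mem_ball.mp hiz).le

theorem det_fderiv_ne_zero_of_tendstoLocallyUniformlyOn (hU : IsOpen U) (hUc : IsPreconnected U)
    (hf : EventuallyHolomorphicOn f l U) (hF : TendstoLocallyUniformlyOn f F l U)
    (hdet : ∀ z ∈ U, ∀ᶠ p in l ×ˢ 𝓝 z, (fderiv ℂ (f p.1) p.2).det ≠ 0) {p : E} (hp : p ∈ U)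
    (hFp : (fderiv ℂ F p).det ≠ 0) {z : E} (hz : z ∈ U) : (fderiv ℂ F z).det ≠ 0 := by
  have : CompleteSpace E := FiniteDimensional.complete ℂ E
  refine ne_zero_of_tendstoLocallyUniformlyOn hU hUc
    (f := fun i y => (fderiv ℂ (f i) y).det) (g := fun y => (fderiv ℂ F y).det)
    (fun y hy => ?_) ?_ hdet hp hFp hz
  · obtain ⟨R, hR, hfR⟩ := eventually_prod_nhds_iff_ball.mp (hf y hy)
    refine eventually_prod_nhds_iff_ball.mpr ⟨R, hR, hfR.mono fun i hi x hx => ?_⟩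
    exact (differentiableOn_det_fderiv isOpen_ball fun w hw =>
      (hi w hw).differentiableWithinAt).differentiableAt (isOpen_ball.mem_nhds hx)
  · have hcont : Continuous fun A : E →L[ℂ] E => A.det := ContinuousLinearMap.continuous_det
    have hdetF := (differentiableOn_det_fderiv hU
      (differentiableOn_of_tendstoLocallyUniformlyOn hU hf hF)).continuousOn
    rw [tendstoLocallyUniformlyOn_iff_tendsto_prod_nhds hU hdetF]
    exact fun y hy => (hcont.tendsto _).comp (tendsto_fderiv_prod_nhds hU hf hF hy)

theorem mapsTo_of_tendstoLocallyUniformlyOn (hU : IsOpen U) (hUc : IsPreconnected U)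
    (hf : EventuallyHolomorphicOn f l U) (hF : TendstoLocallyUniformlyOn f F l U)
    (hdet : ∀ z ∈ U, ∀ᶠ p in l ×ˢ 𝓝 z, (fderiv ℂ (f p.1) p.2).det ≠ 0)
    (hfV : ∀ z ∈ U, ∀ᶠ p in l ×ˢ 𝓝 z, f p.1 p.2 ∈ V) {p : E} (hp : p ∈ U)
    (hFp : (fderiv ℂ F p).det ≠ 0) : MapsTo F U V := by
  intro z hz
  have hFz := det_fderiv_ne_zero_of_tendstoLocallyUniformlyOn hU hUc hf hF hdet hp hFp hz
  obtain ⟨R, hR, hfR⟩ := eventually_prod_nhds_iff_ball.mp (hfV z hz)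
  obtain ⟨i, ⟨y, hy, hyz⟩, hi⟩ := ((eventually_mem_image_of_tendstoLocallyUniformlyOn hU hf hF hz
    hFz (ball_mem_nhds z hR)).and hfR).exists
  exact hyz ▸ hi y hy

theorem fderiv_comp_fderiv_eq_id_of_tendstoLocallyUniformlyOn (hD : IsOpen D) (hM : IsOpen M)
    (hf : EventuallyHolomorphicOn f l D) (hg : EventuallyHolomorphicOn g l M)
    (hF : TendstoLocallyUniformlyOn f F l D) (hG : TendstoLocallyUniformlyOn g G l M) {p q : E}
    (hp : p ∈ D) (hq : q ∈ M) (hpq : ∀ᶠ i in l, f i p = q)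
    (hgf : ∀ᶠ z in l ×ˢ 𝓝 p, g z.1 (f z.1 z.2) = z.2) :
    fderiv ℂ G q ∘L fderiv ℂ F p = ContinuousLinearMap.id ℂ E := by
  have : CompleteSpace E := FiniteDimensional.complete ℂ E
  have hF' := (tendstoLocallyUniformlyOn_fderiv hD hf hF).tendsto_at hp
  have hG' := (tendstoLocallyUniformlyOn_fderiv hM hg hG).tendsto_at hq
  refine tendsto_nhds_unique (((continuous_fst.clm_comp continuous_snd).tendsto _).comp
    (hG'.prodMk_nhds hF')) (tendsto_const_nhds.congr' ?_)
  filter_upwards [hpq, hgf.curry, (hf p hp).curry, (hg q hq).curry] with i hi higf hif hig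
  have hchain : HasFDerivAt (g i ∘ f i) (fderiv ℂ (g i) q ∘L fderiv ℂ (f i) p) p := by
    refine HasFDerivAt.comp p ?_ hif.self_of_nhds.hasFDerivAt
    rw [hi]
    exact hig.self_of_nhds.hasFDerivAt
  exact ((hasFDerivAt_id p).congr_of_eventuallyEq higf).unique hchain

theorem leftInvOn_of_tendstoLocallyUniformlyOn (hM : IsOpen M)
    (hg : EventuallyHolomorphicOn g l M) (hF : TendstoLocallyUniformlyOn f F l D)
    (hG : TendstoLocallyUniformlyOn g G l M) (hFM : MapsTo F D M)
    (hgf : ∀ z ∈ D, ∀ᶠ i in l, g i (f i z) = z) : LeftInvOn G F D := by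
  have : CompleteSpace E := FiniteDimensional.complete ℂ E
  intro z hz
  have hGc := (differentiableOn_of_tendstoLocallyUniformlyOn hM hg hG).continuousOn
  have hlim := ((tendstoLocallyUniformlyOn_iff_tendsto_prod_nhds hM hGc).mp hG _ (hFM hz)).comp
    (tendsto_id.prodMk (hF.tendsto_at hz))
  exact tendsto_nhds_unique hlim (tendsto_const_nhds.congr' ((hgf z hz).mono fun _ => Eq.symm))

theorem bijOn_of_tendstoLocallyUniformlyOn (hD : IsOpen D) (hDc : IsPreconnected D)
    (hM : IsOpen M) (hMc : IsPreconnected M) (hf : EventuallyHolomorphicOn f l D)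
    (hg : EventuallyHolomorphicOn g l M) (hfM : ∀ z ∈ D, ∀ᶠ p in l ×ˢ 𝓝 z, f p.1 p.2 ∈ M)
    (hgD : ∀ w ∈ M, ∀ᶠ p in l ×ˢ 𝓝 w, g p.1 p.2 ∈ D)
    (hgf : ∀ z ∈ D, ∀ᶠ p in l ×ˢ 𝓝 z, g p.1 (f p.1 p.2) = p.2)
    (hfg : ∀ w ∈ M, ∀ᶠ p in l ×ˢ 𝓝 w, f p.1 (g p.1 p.2) = p.2)
    (hF : TendstoLocallyUniformlyOn f F l D) (hG : TendstoLocallyUniformlyOn g G l M) {p q : E}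
    (hp : p ∈ D) (hq : q ∈ M) (hpq : ∀ᶠ i in l, f i p = q) : BijOn F D M := by
  have hdet : (fderiv ℂ G q).det * (fderiv ℂ F p).det = 1 := by
    have hid := fderiv_comp_fderiv_eq_id_of_tendstoLocallyUniformlyOn hD hM hf hg hF hG hp hq hpq
      (hgf p hp)
    simpa [ContinuousLinearMap.det, LinearMap.det_comp] using
      congrArg ContinuousLinearMap.det hid
  have hFM : MapsTo F D M := mapsTo_of_tendstoLocallyUniformlyOn hD hDc hf hF
    (fun z hz => eventually_det_fderiv_ne_zero_of_leftInverse (hf z hz) (hgf z hz)) hfM hp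
    (right_ne_zero_of_mul_eq_one hdet)
  have hGD : MapsTo G M D := mapsTo_of_tendstoLocallyUniformlyOn hM hMc hg hG
    (fun w hw => eventually_det_fderiv_ne_zero_of_leftInverse (hg w hw) (hfg w hw)) hgD hq
    (left_ne_zero_of_mul_eq_one hdet)
  have hGF : LeftInvOn G F D := leftInvOn_of_tendstoLocallyUniformlyOn hM hg hF hG hFM
    fun z hz => (hgf z hz).curry.mono fun _ h => h.self_of_nhds
  have hFG : LeftInvOn F G M := leftInvOn_of_tendstoLocallyUniformlyOn hD hf hG hF hGD
    fun w hw => (hfg w hw).curry.mono fun _ h => h.self_of_nhds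
  exact InvOn.bijOn ⟨hGF, hFG⟩ hFM hGD

end Limits

end InjectiveHolomorphicMaps

section Exhaustion

open TopologicalSpace (Compacts)

theorem isBoundedUnder_norm_of_eventually_mem {E α : Type*} [SeminormedAddCommGroup E]
    {l : Filter α} {u : α → E} {s : Set E} (hs : Bornology.IsBounded s)
    (hu : ∀ᶠ a in l, u a ∈ s) : l.IsBoundedUnder (· ≤ ·) fun a => ‖u a‖ := by
  obtain ⟨C, hC⟩ := hs.exists_norm_le
  exact isBoundedUnder_of_eventually_le (hu.mono fun a ha => hC _ ha)

theorem isPreconnected_of_forall_pair_subset_image {X Y : Type*} [TopologicalSpace X]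
    [TopologicalSpace Y] {D : Set X} {M : Set Y} (hD : IsPreconnected D)
    (h : ∀ x ∈ M, ∀ y ∈ M, ∃ f, ContinuousOn f D ∧ MapsTo f D M ∧ {x, y} ⊆ f '' D) :
    IsPreconnected M := by
  refine isPreconnected_of_forall_pair fun x hx y hy => ?_
  obtain ⟨f, hfc, hfM, hf⟩ := h x hx y hy
  exact ⟨f '' D, hfM.image_subset, hf (mem_insert _ _), hf (mem_insert_of_mem _ rfl),
    hD.image f hfc⟩

theorem eventually_mem_coe_image_compacts {X : Type*} [TopologicalSpace X]
    [LocallyCompactSpace X] {M : Set X} (hM : IsOpen M) {w : X} (hw : w ∈ M) :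
    ∀ᶠ p in (atTop : Filter (Compacts M)) ×ˢ 𝓝 w,
      p.2 ∈ Subtype.val '' (p.1 : Set M) := by
  have : LocallyCompactSpace M := hM.locallyCompactSpace
  obtain ⟨K, hK, hKw⟩ := exists_compact_mem_nhds (⟨w, hw⟩ : M)
  filter_upwards [(eventually_ge_atTop (⟨K, hK⟩ : Compacts M)).prod_mk
    (hM.isOpenEmbedding_subtypeVal.image_mem_nhds.mpr hKw)] with p hp
  exact image_mono hp.1 hp.2

variable {E : Type*} [NormedAddCommGroup E] [NormedSpace ℂ E] {D M : Set E}

theorem exists_pointed_exhaustion {p q : E} (hq : q ∈ M)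
    (hhom : ∀ r ∈ D, ∃ φ, DifferentiableOn ℂ φ D ∧ BijOn φ D D ∧ φ p = r)
    (hexh : ∀ K ⊆ M, IsCompact K →
      ∃ f : E → E, DifferentiableOn ℂ f D ∧ InjOn f D ∧ MapsTo f D M ∧ K ⊆ f '' D)
    {K : Set E} (hKM : K ⊆ M) (hK : IsCompact K) :
    ∃ f, DifferentiableOn ℂ f D ∧ InjOn f D ∧ MapsTo f D M ∧ f p = q ∧ K ⊆ f '' D := by
  obtain ⟨f, hfd, hfi, hfM, hfK⟩ := hexh (insert q K) (insert_subset hq hKM) (hK.insert q)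
  obtain ⟨r, hr, hfr⟩ := hfK (mem_insert q K)
  obtain ⟨φ, hφd, hφ, hφp⟩ := hhom r hr
  refine ⟨f ∘ φ, hfd.comp hφd hφ.mapsTo, hfi.comp hφ.injOn hφ.mapsTo, hfM.comp hφ.mapsTo,
    (congrArg f hφp).trans hfr, ?_⟩
  rw [image_comp, hφ.image_eq]
  exact (subset_insert q K).trans hfK

variable [FiniteDimensional ℂ E]

theorem exists_bijOn_of_eventually_mem_image {ι : Type*} {l : Filter ι} [l.NeBot]
    {f : ι → E → E} (hD : IsOpen D) (hDc : IsPreconnected D) (hDb : Bornology.IsBounded D)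
    (hM : IsOpen M) (hMc : IsPreconnected M) (hMb : Bornology.IsBounded M)
    (hfd : ∀ i, DifferentiableOn ℂ (f i) D) (hfi : ∀ i, InjOn (f i) D)
    (hfM : ∀ i, MapsTo (f i) D M) (himage : ∀ w ∈ M, ∀ᶠ r in l ×ˢ 𝓝 w, r.2 ∈ f r.1 '' D)
    {p q : E} (hp : p ∈ D) (hq : q ∈ M) (hfp : ∀ i, f i p = q) :
    ∃ F, DifferentiableOn ℂ F D ∧ BijOn F D M := by
  have : CompleteSpace E := FiniteDimensional.complete ℂ E
  wlog hl : ∃ u : Ultrafilter ι, l = u generalizing l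
  · exact this (l := Ultrafilter.of l)
      (fun w hw => (himage w hw).filter_mono (prod_mono_left _ (Ultrafilter.of_le l))) ⟨_, rfl⟩
  obtain ⟨u, rfl⟩ := hl
  set g := fun i => Function.invFunOn (f i) D
  have hgf : ∀ i, LeftInvOn (g i) (f i) D := fun i => (hfi i).leftInvOn_invFunOn
  have hDev : ∀ z ∈ D, ∀ᶠ r : ι × E in u ×ˢ 𝓝 z, r.2 ∈ D := fun z hz =>
    tendsto_snd.eventually (hD.eventually_mem hz)
  have hf : EventuallyHolomorphicOn f u D := fun z hz =>
    (hDev z hz).mono fun r hr => (hfd r.1).differentiableAt (hD.mem_nhds hr)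
  have hg : EventuallyHolomorphicOn g u M := fun w hw => (himage w hw).mono fun r hr =>
    (differentiableOn_image_of_leftInvOn hD (hfd r.1) (hgf r.1)).differentiableAt
      ((isOpen_image_of_injOn hD (hfd r.1) (hfi r.1)).mem_nhds hr)
  have hfmem : ∀ z ∈ D, ∀ᶠ r : ι × E in u ×ˢ 𝓝 z, f r.1 r.2 ∈ M := fun z hz =>
    (hDev z hz).mono fun r hr => hfM r.1 hr
  have hgmem : ∀ w ∈ M, ∀ᶠ r : ι × E in u ×ˢ 𝓝 w, g r.1 r.2 ∈ D := fun w hw =>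
    (himage w hw).mono fun r hr => Function.invFunOn_mem hr
  obtain ⟨F, hF⟩ := exists_tendstoLocallyUniformlyOn_of_ultrafilter hD hf fun z hz =>
    isBoundedUnder_norm_of_eventually_mem hMb (hfmem z hz)
  obtain ⟨G, hG⟩ := exists_tendstoLocallyUniformlyOn_of_ultrafilter hM hg fun w hw =>
    isBoundedUnder_norm_of_eventually_mem hDb (hgmem w hw)
  refine ⟨F, differentiableOn_of_tendstoLocallyUniformlyOn hD hf hF, ?_⟩
  exact bijOn_of_tendstoLocallyUniformlyOn hD hDc hM hMc hf hg hfmem hgmem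
    (fun z hz => (hDev z hz).mono fun r hr => hgf r.1 hr)
    (fun w hw => (himage w hw).mono fun r hr => Function.invFunOn_eq hr)
    hF hG hp hq (.of_forall hfp)

theorem exists_bijOn_of_pointed_exhaustion_of_isBounded (hD : IsOpen D) (hDc : IsPreconnected D)
    (hDb : Bornology.IsBounded D) (hM : IsOpen M) (hMc : IsPreconnected M)
    (hMb : Bornology.IsBounded M) {p q : E} (hp : p ∈ D) (hq : q ∈ M)
    (hexh : ∀ K ⊆ M, IsCompact K →
      ∃ f, DifferentiableOn ℂ f D ∧ InjOn f D ∧ MapsTo f D M ∧ f p = q ∧ K ⊆ f '' D) :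
    ∃ F, DifferentiableOn ℂ F D ∧ BijOn F D M := by
  have : ProperSpace E := FiniteDimensional.proper ℂ E
  choose f hfd hfi hfM hfp hfK using fun K : Compacts M =>
    hexh _ (Subtype.coe_image_subset M K) (K.isCompact.image continuous_subtype_val)
  exact exists_bijOn_of_eventually_mem_image hD hDc hDb hM hMc hMb hfd hfi hfM
    (fun w hw => (eventually_mem_coe_image_compacts hM hw).mono fun r hr => hfK r.1 hr)
    hp hq hfp

theorem exists_bijOn_of_pointed_exhaustion (hD : IsOpen D) (hDc : IsPreconnected D)
    (hM : IsOpen M) (hMc : IsPreconnected M) (hMb : Bornology.IsBounded M) {p q : E} (hp : p ∈ D)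
    (hq : q ∈ M)
    (hexh : ∀ K ⊆ M, IsCompact K →
      ∃ f, DifferentiableOn ℂ f D ∧ InjOn f D ∧ MapsTo f D M ∧ f p = q ∧ K ⊆ f '' D) :
    ∃ F, DifferentiableOn ℂ F D ∧ BijOn F D M := by
  -- `D` may be unbounded, but its biholomorphic image under any one of the maps into `M` is not.
  obtain ⟨f₀, hf₀d, hf₀i, hf₀M, -⟩ := hexh ∅ (empty_subset M) isCompact_empty
  set g₀ := Function.invFunOn f₀ D
  have hg₀ : InvOn g₀ f₀ D (f₀ '' D) := hf₀i.bijOn_image.invOn_invFunOn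
  have hg₀b : BijOn g₀ (f₀ '' D) D := hf₀i.bijOn_image.symm hg₀.symm
  have hg₀d : DifferentiableOn ℂ g₀ (f₀ '' D) :=
    differentiableOn_image_of_leftInvOn hD hf₀d hg₀.1
  obtain ⟨F, hFd, hFb⟩ : ∃ F, DifferentiableOn ℂ F (f₀ '' D) ∧ BijOn F (f₀ '' D) M := by
    refine exists_bijOn_of_pointed_exhaustion_of_isBounded (isOpen_image_of_injOn hD hf₀d hf₀i)
      (hDc.image f₀ hf₀d.continuousOn) (hMb.subset hf₀M.image_subset) hM hMc hMb
      (mem_image_of_mem f₀ hp) hq fun K hKM hK => ?_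
    obtain ⟨f, hfd, hfi, hfM, hfp, hfK⟩ := hexh K hKM hK
    refine ⟨f ∘ g₀, hfd.comp hg₀d hg₀b.mapsTo, hfi.comp hg₀b.injOn hg₀b.mapsTo,
      hfM.comp hg₀b.mapsTo, (congrArg f (hg₀.1 hp)).trans hfp, ?_⟩
    rwa [image_comp, hg₀b.image_eq]
  exact ⟨F ∘ f₀, hFd.comp hf₀d (mapsTo_image f₀ D), hFb.comp hf₀i.bijOn_image⟩

theorem stmt11_general (hDopen : IsOpen D) (hDconn : IsConnected D) (hMopen : IsOpen M)
    (hMbdd : Bornology.IsBounded M)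
    (hhom : ∀ p ∈ D, ∀ q ∈ D, ∃ φ, DifferentiableOn ℂ φ D ∧ BijOn φ D D ∧ φ p = q)
    (hexh : ∀ K ⊆ M, IsCompact K →
      ∃ f : E → E, DifferentiableOn ℂ f D ∧ InjOn f D ∧ MapsTo f D M ∧ K ⊆ f '' D) :
    ∃ F G : E → E, DifferentiableOn ℂ F D ∧ BijOn F D M ∧ DifferentiableOn ℂ G M ∧
      (∀ z ∈ D, G (F z) = z) ∧ ∀ w ∈ M, F (G w) = w := by
  have hMconn : IsPreconnected M := by
    refine isPreconnected_of_forall_pair_subset_image hDconn.isPreconnected fun x hx y hy => ?_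
    obtain ⟨f, hfd, -, hfM, hf⟩ := hexh {x, y} (pair_subset hx hy) (toFinite _).isCompact
    exact ⟨f, hfd.continuousOn, hfM, hf⟩
  obtain ⟨p, hp⟩ := hDconn.nonempty
  obtain ⟨f₀, -, -, hf₀M, -⟩ := hexh ∅ (empty_subset M) isCompact_empty
  obtain ⟨F, hFd, hFb⟩ := exists_bijOn_of_pointed_exhaustion hDopen hDconn.isPreconnected hMopen
    hMconn hMbdd hp (hf₀M hp) fun _ => exists_pointed_exhaustion (hf₀M hp) (hhom p hp) hexh
  obtain ⟨hleft, hright⟩ := hFb.invOn_invFunOn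
  exact ⟨F, Function.invFunOn F D, hFd, hFb,
    hFb.image_eq ▸ differentiableOn_image_of_leftInvOn hDopen hFd hleft, hleft, hright⟩

end Exhaustion

theorem stmt11 (N : ℕ) (hN : 1 ≤ N)
    (D M : Set (Fin N → ℂ))
    (hDopen : IsOpen D) (hDconn : IsConnected D) (hDbdd : Bornology.IsBounded D)
    (hMopen : IsOpen M) (hMconn : IsConnected M) (hMbdd : Bornology.IsBounded M)
    (hhom : ∀ p ∈ D, ∀ q ∈ D,
      ∃ φ ψ : (Fin N → ℂ) → (Fin N → ℂ),
        DifferentiableOn ℂ φ D ∧ Set.BijOn φ D D ∧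
        DifferentiableOn ℂ ψ D ∧
        (∀ z ∈ D, ψ (φ z) = z) ∧ (∀ z ∈ D, φ (ψ z) = z) ∧ φ p = q)
    (hexh : ∀ K : Set (Fin N → ℂ), K ⊆ M → IsCompact K →
      ∃ f : (Fin N → ℂ) → (Fin N → ℂ),
        DifferentiableOn ℂ f D ∧ Set.InjOn f D ∧ Set.MapsTo f D M ∧ K ⊆ f '' D) :
    ∃ F G : (Fin N → ℂ) → (Fin N → ℂ),
      DifferentiableOn ℂ F D ∧ Set.BijOn F D M ∧
      DifferentiableOn ℂ G M ∧
      (∀ z ∈ D, G (F z) = z) ∧ (∀ w ∈ M, F (G w) = w) := by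
  exact stmt11_general hDopen hDconn hMopen hMbdd
    (fun p hp q hq => (hhom p hp q hq).imp fun _ ⟨_, hφd, hφ, _, _, _, hφp⟩ => ⟨hφd, hφ, hφp⟩) hexh
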